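/- Along the interpolation H_{N,t} = √t H_N + √(1−t) H'_N, the derivative of φ_N(t) := (1/N) E[log Z_N(t)] equals (β²/2) Σ_{|x−y|=1} α_x α_y (1−q_x)(1−q_y) − (β²/2) Σ_{|x−y|=1} α_x α_y E⟨(q_x − R^{(x)})(q_y − R^{(y)})⟩_t. -/

import Mathlib

open MeasureTheory ProbabilityTheory Real Set
open scoped BigOperators

noncomputable section

namespace DRBM

/-- `±1` spin attached to a Boolean. -/
def sg (s : Bool) : ℝ := if s then 1 else -1

/-- Configurations: `ν` layers, each using the first `Nv x` of `N` sites. -/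
abbrev Config (ν N : ℕ) := Fin ν → Fin N → Bool

/-- Quenched weights: `ξ x i j` couples site `i` of layer `x` with site `j`
of layer `x+1`. -/
abbrev Weights (ν N : ℕ) := Fin ν → Fin N → Fin N → ℝ

/-- External Gaussian fields for the interpolation. -/
abbrev Fields (ν N : ℕ) := Fin ν → Fin N → ℝ

/-- i.i.d. standard Gaussian law of the weights. -/
def μW (ν N : ℕ) : Measure (Weights ν N) :=
  Measure.pi fun _ => Measure.pi fun _ => Measure.pi fun _ => gaussianReal 0 1

/-- i.i.d. standard Gaussian law of the fields. -/
def μF (ν N : ℕ) : Measure (Fields ν N) :=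
  Measure.pi fun _ => Measure.pi fun _ => gaussianReal 0 1

/-- The deep RBM Hamiltonian
`H_N(σ) = −Σ_{x} Σ_{i<N_x, j<N_{x+1}} ξ^x_{ij}/√N σ^x_i σ^{x+1}_j`. -/
def ham (ν N : ℕ) (Nv : Fin ν → ℕ) (ξ : Weights ν N) (σ : Config ν N) : ℝ :=
  - ∑ x : Fin ν, ∑ y : Fin ν,
      (if (y : ℕ) = (x : ℕ) + 1 then
        ∑ i : Fin N, ∑ j : Fin N,
          (if (i : ℕ) < Nv x ∧ (j : ℕ) < Nv y then
            ξ x i j / Real.sqrt N * sg (σ x i) * sg (σ y j)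
          else 0)
      else 0)

/-- `Qv x = Σ_{|y−x|=1} α_y q_y`. -/
def Qv (ν : ℕ) (α q : Fin ν → ℝ) (x : Fin ν) : ℝ :=
  ∑ y : Fin ν,
    (if (y : ℕ) = (x : ℕ) + 1 ∨ (y : ℕ) + 1 = (x : ℕ) then α y * q y else 0)

/-- The one-body interpolating Hamiltonian
`H'_N(σ) = Σ_x √(Σ_{|y−x|=1} α_y q_y) Σ_i η^x_i σ^x_i`. -/
def ham' (ν N : ℕ) (Nv : Fin ν → ℕ) (α q : Fin ν → ℝ) (η : Fields ν N)
    (σ : Config ν N) : ℝ :=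
  ∑ x : Fin ν, Real.sqrt (Qv ν α q x) *
    ∑ i : Fin N, (if (i : ℕ) < Nv x then η x i * sg (σ x i) else 0)

/-- Interpolating Hamiltonian `H_{N,t} = √t H_N + √(1−t) H'_N`. -/
def hamT (ν N : ℕ) (Nv : Fin ν → ℕ) (α q : Fin ν → ℝ) (t : ℝ)
    (ξ : Weights ν N) (η : Fields ν N) (σ : Config ν N) : ℝ :=
  Real.sqrt t * ham ν N Nv ξ σ + Real.sqrt (1 - t) * ham' ν N Nv α q η σ

/-- Bias term `Σ_x b_x Σ_i σ^x_i`. -/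
def bias (ν N : ℕ) (Nv : Fin ν → ℕ) (b : Fin ν → ℝ) (σ : Config ν N) : ℝ :=
  ∑ x : Fin ν, b x * ∑ i : Fin N, (if (i : ℕ) < Nv x then sg (σ x i) else 0)

/-- Boltzmann weight of a configuration along the interpolation. -/
def bw (ν N : ℕ) (Nv : Fin ν → ℕ) (α q : Fin ν → ℝ) (β t : ℝ)
    (b : Fin ν → ℝ) (ξ : Weights ν N) (η : Fields ν N) (σ : Config ν N) : ℝ :=
  Real.exp (-β * hamT ν N Nv α q t ξ η σ + bias ν N Nv b σ)

/-- Interpolating partition function `Z_N(t) = Ê_σ e^{−βH_{N,t}}` (the prior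
`Ê` being the product of `±1` biased Bernoulli averages). -/
def Z (ν N : ℕ) (Nv : Fin ν → ℕ) (α q : Fin ν → ℝ) (β t : ℝ)
    (b : Fin ν → ℝ) (ξ : Weights ν N) (η : Fields ν N) : ℝ :=
  (∑ σ : Config ν N, bw ν N Nv α q β t b ξ η σ) / 2 ^ (ν * N)

/-- Two-replica Gibbs average `⟨f⟩_t`. -/
def gibbs2 (ν N : ℕ) (Nv : Fin ν → ℕ) (α q : Fin ν → ℝ) (β t : ℝ)
    (b : Fin ν → ℝ) (ξ : Weights ν N) (η : Fields ν N)
    (f : Config ν N → Config ν N → ℝ) : ℝ :=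
  (∑ σ : Config ν N, ∑ τ : Config ν N,
      f σ τ * bw ν N Nv α q β t b ξ η σ * bw ν N Nv α q β t b ξ η τ) /
    (∑ σ : Config ν N, bw ν N Nv α q β t b ξ η σ) ^ 2

/-- Layer-`x` overlap `R^{(x)}(σ,τ) = (σ^{(x)},τ^{(x)})/N_x`. -/
def ovl (ν N : ℕ) (Nv : Fin ν → ℕ) (x : Fin ν)
    (σ τ : Config ν N) : ℝ :=
  (∑ i : Fin N, (if (i : ℕ) < Nv x then sg (σ x i) * sg (τ x i) else 0)) /
    (Nv x : ℝ)

/-- Sum over (unordered) adjacent pairs of layers `Σ_{|x−y|=1}`. -/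
def adjSum (ν : ℕ) (F : Fin ν → Fin ν → ℝ) : ℝ :=
  ∑ x : Fin ν, ∑ y : Fin ν, (if (y : ℕ) = (x : ℕ) + 1 then F x y else 0)

/-!
The exponent `-β H_{N,t}` plus the bias is a Gaussian field, linear in the disorder `(ξ, η)`, with
its `ξ`-part scaled by `√t` and its `η`-part by `√(1 - t)`. Differentiating `E[log Z_N(t)]` under
the integral gives the Gibbs average of a field linear in the disorder, and Gaussian integration by
parts turns it into `(1/2) E⟨D(σ, σ) - D(σ, τ)⟩_t`, where `D` is the covariance of `-β H_N` minus
that of `-β H'_N`; the factors `±1/2` come from `√t · (√t)' = 1/2` and its analogue for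
`√(1 - t)`. In terms of the overlaps,
`D(σ, τ) = β² N Σ_{|x-y|=1} α_x α_y (R_x R_y - q_y R_x - q_x R_y)`.
Completing the square adds only a constant, which cancels in the difference, and `R_x(σ, σ) = 1`
on the diagonal.
-/

open scoped NNReal Topology

section GaussianIntegrationByParts

lemma hasDerivAt_gaussianPDFReal (m : ℝ) (v : ℝ≥0) (x : ℝ) :
    HasDerivAt (gaussianPDFReal m v) (-(x - m) / v * gaussianPDFReal m v x) x := by
  have hexponent : HasDerivAt (fun x ↦ -(x - m) ^ 2 / (2 * v)) (-(x - m) / v) x :=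
    ((((hasDerivAt_id x).sub_const m).pow 2).neg.div_const (2 * v : ℝ)).congr_deriv
      (by simp only [id]; ring)
  rw [gaussianPDFReal_def]
  exact (hexponent.exp.const_mul _).congr_deriv (by ring)

lemma integrable_gaussianReal_iff {m : ℝ} {v : ℝ≥0} (hv : v ≠ 0) {f : ℝ → ℝ} :
    Integrable f (gaussianReal m v) ↔ Integrable fun x ↦ gaussianPDFReal m v x * f x := by
  rw [gaussianReal_of_var_ne_zero m hv,
    integrable_withDensity_iff_integrable_smul' (measurable_gaussianPDF m v)
      (ae_of_all _ fun _ ↦ gaussianPDF_lt_top)]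
  simp only [toReal_gaussianPDF, smul_eq_mul]

theorem integral_sub_mul_gaussianReal {m : ℝ} {v : ℝ≥0} {f f' : ℝ → ℝ}
    (hf : ∀ x, HasDerivAt f (f' x) x) (hf_int : Integrable f (gaussianReal m v))
    (hf'_int : Integrable f' (gaussianReal m v))
    (hxf_int : Integrable (fun x ↦ (x - m) * f x) (gaussianReal m v)) :
    ∫ x, (x - m) * f x ∂gaussianReal m v = v * ∫ x, f' x ∂gaussianReal m v := by
  rcases eq_or_ne v 0 with rfl | hv
  · simp [gaussianReal_zero_var]
  have hv' : (v : ℝ) ≠ 0 := NNReal.coe_ne_zero.2 hv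
  rw [integrable_gaussianReal_iff hv] at hf_int hf'_int hxf_int
  have hparts := integral_mul_deriv_eq_deriv_mul_of_integrable (fun x _ ↦ hf x)
    (fun x _ ↦ hasDerivAt_gaussianPDFReal m v x)
    ((hxf_int.const_mul (-(v : ℝ)⁻¹)).congr (ae_of_all _ fun x ↦ by simp only [Pi.mul_apply]; ring))
    (hf'_int.congr (ae_of_all _ fun x ↦ mul_comm _ _))
    (hf_int.congr (ae_of_all _ fun x ↦ mul_comm _ _))
  simp only [integral_gaussianReal_eq_integral_smul hv, smul_eq_mul]
  calc ∫ x, gaussianPDFReal m v x * ((x - m) * f x)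
      = ∫ x, -v * (f x * (-(x - m) / v * gaussianPDFReal m v x)) := by
        congr with x; field_simp
    _ = v * ∫ x, gaussianPDFReal m v x * f' x := by
        rw [integral_const_mul, hparts, neg_mul_neg]; simp only [mul_comm]

section Update

variable {ι : Type*} [Fintype ι] [DecidableEq ι] {X : ι → Type*} [∀ i, MeasurableSpace (X i)]

lemma measurePreserving_update (μ : ∀ i, Measure (X i)) [∀ i, IsProbabilityMeasure (μ i)] (k : ι) :
    MeasurePreserving (fun p : X k × (∀ i, X i) ↦ Function.update p.2 k p.1)
      ((μ k).prod (Measure.pi μ)) (Measure.pi μ) := by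
  have hmeas : Measurable fun p : X k × (∀ i, X i) ↦ Function.update p.2 k p.1 :=
    measurable_update'.comp measurable_swap
  refine ⟨hmeas, (Measure.pi_eq fun s hs ↦ ?_).symm⟩
  have hpre : (fun p : X k × (∀ i, X i) ↦ Function.update p.2 k p.1) ⁻¹' univ.pi s =
      s k ×ˢ univ.pi (Function.update s k univ) := by
    ext ⟨x, g⟩
    simp only [mem_preimage, mem_univ_pi, mem_prod, Function.forall_update_iff g fun i z ↦ z ∈ s i,
      Function.forall_update_iff s fun i (t : Set (X i)) ↦ g i ∈ t, mem_univ, true_and, ne_eq]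
  rw [Measure.map_apply hmeas (MeasurableSet.univ_pi hs), hpre, Measure.prod_prod, Measure.pi_pi,
    ← Finset.mul_prod_erase Finset.univ _ (Finset.mem_univ k),
    ← Finset.mul_prod_erase Finset.univ (fun i ↦ μ i (s i)) (Finset.mem_univ k),
    Function.update_self, measure_univ, one_mul]
  congr 1
  exact Finset.prod_congr rfl fun j hj ↦ by rw [Function.update_of_ne (Finset.ne_of_mem_erase hj)]

variable {E : Type*} [NormedAddCommGroup E] {μ : ∀ i, Measure (X i)}
  [∀ i, IsProbabilityMeasure (μ i)] {f : (∀ i, X i) → E}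

lemma ae_integrable_update (k : ι) (hf : Integrable f (Measure.pi μ)) :
    ∀ᵐ g ∂Measure.pi μ, Integrable (fun x ↦ f (Function.update g k x)) (μ k) :=
  ((measurePreserving_update μ k).integrable_comp_of_integrable hf).prod_left_ae

lemma integral_pi_eq_integral_integral_update [NormedSpace ℝ E] (k : ι)
    (hf : Integrable f (Measure.pi μ)) :
    ∫ g, f g ∂Measure.pi μ = ∫ g, ∫ x, f (Function.update g k x) ∂μ k ∂Measure.pi μ := by
  have hupd := measurePreserving_update μ k
  calc ∫ g, f g ∂Measure.pi μ
      = ∫ p, f (Function.update p.2 k p.1) ∂(μ k).prod (Measure.pi μ) := by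
        conv_lhs => rw [← hupd.map_eq]
        exact integral_map hupd.aemeasurable (by rw [hupd.map_eq]; exact hf.aestronglyMeasurable)
    _ = _ := integral_prod_symm _ (hupd.integrable_comp_of_integrable hf)

end Update

theorem integral_sub_mul_pi_gaussianReal {ι : Type*} [Fintype ι] [DecidableEq ι]
    {m : ι → ℝ} {v : ι → ℝ≥0} (k : ι) {f f' : (ι → ℝ) → ℝ}
    (hf : ∀ g x, HasDerivAt (fun x ↦ f (Function.update g k x)) (f' (Function.update g k x)) x)
    (hf_int : Integrable f (Measure.pi fun i ↦ gaussianReal (m i) (v i)))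
    (hf'_int : Integrable f' (Measure.pi fun i ↦ gaussianReal (m i) (v i)))
    (hgf_int : Integrable (fun g ↦ (g k - m k) * f g)
      (Measure.pi fun i ↦ gaussianReal (m i) (v i))) :
    ∫ g, (g k - m k) * f g ∂(Measure.pi fun i ↦ gaussianReal (m i) (v i)) =
      v k * ∫ g, f' g ∂(Measure.pi fun i ↦ gaussianReal (m i) (v i)) := by
  rw [integral_pi_eq_integral_integral_update k hgf_int,
    integral_pi_eq_integral_integral_update k hf'_int, ← integral_const_mul]
  refine integral_congr_ae ?_
  filter_upwards [ae_integrable_update k hf_int, ae_integrable_update k hf'_int,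
    ae_integrable_update k hgf_int] with g hg hg' hgx
  simp only [Function.update_self] at hgx ⊢
  exact integral_sub_mul_gaussianReal (hf g) hg hg' hgx

end GaussianIntegrationByParts

section GibbsAverage

variable {S : Type*} [Fintype S]

/-- The free energy `log ∑ exp u` of the Boltzmann weights `exp u` on a finite set, up to sign and
normalisation of the reference measure. -/
def logSumExp (u : S → ℝ) : ℝ := log (∑ σ, exp (u σ))

/-- The Gibbs average `f ↦ ⟨f⟩` for the Boltzmann weights `exp u` on a finite set, bundled as a
linear functional. -/
def gibbsAvg (u : S → ℝ) : (S → ℝ) →ₗ[ℝ] ℝ :=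
  (∑ σ, exp (u σ))⁻¹ • ∑ σ, exp (u σ) • LinearMap.proj σ

/-- The two-replica Gibbs average: both replicas are drawn independently from the weights
`exp u`. -/
def replicaAvg (u : S → ℝ) : (S × S → ℝ) →ₗ[ℝ] ℝ :=
  gibbsAvg fun p ↦ u p.1 + u p.2

lemma gibbsAvg_apply (u f : S → ℝ) :
    gibbsAvg u f = (∑ σ, f σ * exp (u σ)) / ∑ σ, exp (u σ) := by
  simp only [gibbsAvg, LinearMap.smul_apply, LinearMap.sum_apply, LinearMap.proj_apply,
    smul_eq_mul, mul_comm, div_eq_mul_inv]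

lemma sum_exp_add_prod (u : S → ℝ) :
    ∑ p : S × S, exp (u p.1 + u p.2) = (∑ σ, exp (u σ)) ^ 2 := by
  simp only [exp_add, Fintype.sum_prod_type, sq, Finset.sum_mul_sum]

lemma replicaAvg_mul (u f g : S → ℝ) :
    replicaAvg u (fun p ↦ f p.1 * g p.2) = gibbsAvg u f * gibbsAvg u g := by
  rw [replicaAvg, gibbsAvg_apply, gibbsAvg_apply, gibbsAvg_apply, sum_exp_add_prod,
    div_mul_div_comm, ← sq, Fintype.sum_prod_type, Finset.sum_mul_sum]
  congr! 3
  rw [exp_add]; ring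

lemma measurable_gibbsAvg (f : S → ℝ) : Measurable fun u ↦ gibbsAvg u f := by
  simp only [gibbsAvg_apply]; fun_prop

lemma measurable_logSumExp : Measurable (logSumExp : (S → ℝ) → ℝ) := by
  unfold logSumExp; fun_prop

variable [Nonempty S]

lemma sum_exp_pos (u : S → ℝ) : 0 < ∑ σ, exp (u σ) :=
  Finset.sum_pos (fun _ _ ↦ exp_pos _) Finset.univ_nonempty

lemma gibbsAvg_const (u : S → ℝ) (c : ℝ) : gibbsAvg u (fun _ ↦ c) = c := by
  rw [gibbsAvg_apply, ← Finset.mul_sum, mul_div_cancel_right₀ _ (sum_exp_pos u).ne']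

lemma replicaAvg_const (u : S → ℝ) (c : ℝ) : replicaAvg u (fun _ ↦ c) = c :=
  gibbsAvg_const _ c

lemma replicaAvg_fst (u f : S → ℝ) : replicaAvg u (fun p ↦ f p.1) = gibbsAvg u f := by
  simpa only [mul_one, gibbsAvg_const] using replicaAvg_mul u f fun _ ↦ 1

lemma abs_gibbsAvg_le_norm (u f : S → ℝ) : |gibbsAvg u f| ≤ ‖f‖ := by
  rw [gibbsAvg_apply, abs_div, abs_of_pos (sum_exp_pos u), div_le_iff₀ (sum_exp_pos u),
    Finset.mul_sum]
  refine (Finset.abs_sum_le_sum_abs _ _).trans (Finset.sum_le_sum fun σ _ ↦ ?_)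
  rw [abs_mul, abs_exp]
  gcongr
  exact norm_le_pi_norm f σ

lemma abs_logSumExp_le (u : S → ℝ) : |logSumExp u| ≤ log (Fintype.card S) + ‖u‖ := by
  have hcard : (1 : ℝ) ≤ Fintype.card S := by exact_mod_cast Fintype.card_pos
  have habs (σ : S) : |u σ| ≤ ‖u‖ := norm_le_pi_norm u σ
  refine abs_le.2 ⟨?_, ?_⟩
  · obtain ⟨σ⟩ := ‹Nonempty S›
    calc -(log (Fintype.card S) + ‖u‖) ≤ u σ := by
          linarith [Real.log_nonneg hcard, neg_abs_le (u σ), habs σ]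
      _ = log (exp (u σ)) := (log_exp _).symm
      _ ≤ logSumExp u := log_le_log (exp_pos _) <|
          Finset.single_le_sum (f := fun σ ↦ exp (u σ)) (fun _ _ ↦ (exp_pos _).le)
            (Finset.mem_univ σ)
  · calc logSumExp u ≤ log (Fintype.card S * exp ‖u‖) := by
          refine log_le_log (sum_exp_pos u) ?_
          rw [← nsmul_eq_mul]
          exact Finset.sum_le_card_nsmul _ _ _ fun σ _ ↦
            exp_le_exp.2 ((le_abs_self _).trans (habs σ))
      _ = log (Fintype.card S) + ‖u‖ := by rw [log_mul (by positivity) (exp_pos _).ne', log_exp]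

lemma hasDerivAt_logSumExp {u : ℝ → S → ℝ} {u' : S → ℝ} {s : ℝ} (hu : HasDerivAt u u' s) :
    HasDerivAt (fun s ↦ logSumExp (u s)) (gibbsAvg (u s) u') s := by
  have hsum : HasDerivAt (fun s ↦ ∑ σ, exp (u s σ)) (∑ σ, exp (u s σ) * u' σ) s :=
    HasDerivAt.fun_sum fun σ _ ↦ (hasDerivAt_pi.1 hu σ).exp
  refine (hsum.log (sum_exp_pos _).ne').congr_deriv ?_
  simp only [gibbsAvg_apply, mul_comm]

lemma hasDerivAt_gibbsAvg {u : ℝ → S → ℝ} {u' : S → ℝ} {s : ℝ} (hu : HasDerivAt u u' s)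
    (f : S → ℝ) :
    HasDerivAt (fun s ↦ gibbsAvg (u s) f)
      (gibbsAvg (u s) (f * u') - gibbsAvg (u s) f * gibbsAvg (u s) u') s := by
  have hden : HasDerivAt (fun s ↦ ∑ σ, exp (u s σ)) (∑ σ, u' σ * exp (u s σ)) s :=
    HasDerivAt.fun_sum fun σ _ ↦ (hasDerivAt_pi.1 hu σ).exp.congr_deriv (mul_comm _ _)
  have hnum : HasDerivAt (fun s ↦ ∑ σ, f σ * exp (u s σ)) (∑ σ, (f * u') σ * exp (u s σ)) s :=
    HasDerivAt.fun_sum fun σ _ ↦ ((hasDerivAt_pi.1 hu σ).exp.const_mul (f σ)).congr_deriv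
      (by rw [Pi.mul_apply]; ring)
  have hpos := (sum_exp_pos (u s)).ne'
  simp only [gibbsAvg_apply]
  exact (hnum.div hden hpos).congr_deriv (by field_simp)

lemma integrable_gibbsAvg {Ω : Type*} [MeasurableSpace Ω] {μ : Measure Ω} [IsFiniteMeasure μ]
    {u : Ω → S → ℝ} (hu : AEMeasurable u μ) (f : S → ℝ) :
    Integrable (fun ω ↦ gibbsAvg (u ω) f) μ :=
  .of_bound ((measurable_gibbsAvg f).comp_aemeasurable hu).aestronglyMeasurable ‖f‖
    (ae_of_all _ fun ω ↦ abs_gibbsAvg_le_norm (u ω) f)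

lemma integrable_replicaAvg {Ω : Type*} [MeasurableSpace Ω] {μ : Measure Ω} [IsFiniteMeasure μ]
    {u : Ω → S → ℝ} (hu : AEMeasurable u μ) (f : S × S → ℝ) :
    Integrable (fun ω ↦ replicaAvg (u ω) f) μ :=
  integrable_gibbsAvg (by fun_prop) f

lemma integral_replicaAvg_const_sub_sum {Ω ι : Type*} [MeasurableSpace Ω] {μ : Measure Ω}
    [IsProbabilityMeasure μ] {u : Ω → S → ℝ} (hu : AEMeasurable u μ) (C : ℝ) (s : Finset ι)
    (c : ι → ℝ) (f : ι → S × S → ℝ) :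
    ∫ ω, replicaAvg (u ω) (fun p ↦ C - ∑ i ∈ s, c i * f i p) ∂μ =
      C - ∑ i ∈ s, c i * ∫ ω, replicaAvg (u ω) (f i) ∂μ := by
  have hfun : (fun p ↦ C - ∑ i ∈ s, c i * f i p) = (fun _ ↦ C) - ∑ i ∈ s, c i • f i := by
    ext p; simp
  have hint (i : ι) : Integrable (fun ω ↦ c i * replicaAvg (u ω) (f i)) μ :=
    (integrable_replicaAvg hu (f i)).const_mul (c i)
  simp only [hfun, map_sub, map_sum, map_smul, smul_eq_mul, replicaAvg_const]
  rw [integral_sub (integrable_const C) (integrable_finsetSum s fun i _ ↦ hint i),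
    integral_finsetSum s fun i _ ↦ hint i, integral_const, probReal_univ, one_smul]
  simp only [integral_const_mul]

lemma integrable_logSumExp {Ω : Type*} [MeasurableSpace Ω] {μ : Measure Ω} [IsFiniteMeasure μ]
    {u : Ω → S → ℝ} (hu : Integrable u μ) :
    Integrable (fun ω ↦ logSumExp (u ω)) μ :=
  ((integrable_const _).add hu.norm).mono'
    (measurable_logSumExp.comp_aemeasurable hu.aemeasurable).aestronglyMeasurable
    (ae_of_all _ fun ω ↦ abs_logSumExp_le (u ω))

end GibbsAverage

section GaussianField

/-- The law of a family of i.i.d. standard Gaussian variables indexed by `ι`. -/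
abbrev stdGaussianPi (ι : Type*) [Fintype ι] : Measure (ι → ℝ) :=
  Measure.pi fun _ ↦ gaussianReal 0 1

/-- The field `σ ↦ ∑ k, g k * a k σ + h σ` on `S`; for `g` of law `stdGaussianPi ι` it is Gaussian
with mean `h` and covariance `∑ k, a k σ * a k τ`. -/
def gaussianField {ι S : Type*} [Fintype ι] (a : ι → S → ℝ) (h : S → ℝ) (g : ι → ℝ) : S → ℝ :=
  ∑ k, g k • a k + h

variable {ι S : Type*} [Fintype ι]

lemma integrable_eval_stdGaussianPi (k : ι) :
    Integrable (fun g : ι → ℝ ↦ g k) (stdGaussianPi ι) :=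
  (measurePreserving_eval (fun _ : ι ↦ gaussianReal 0 1) k).integrable_comp_of_integrable
    ((memLp_id_gaussianReal 1).integrable (by simp))

@[fun_prop]
lemma measurable_gaussianField (a : ι → S → ℝ) (h : S → ℝ) : Measurable (gaussianField a h) := by
  unfold gaussianField; fun_prop

lemma gaussianField_apply (a : ι → S → ℝ) (h : S → ℝ) (g : ι → ℝ) (σ : S) :
    gaussianField a h g σ = ∑ k, g k * a k σ + h σ := by
  simp only [gaussianField, Pi.add_apply, Finset.sum_apply, Pi.smul_apply, smul_eq_mul]

lemma hasDerivAt_gaussianField_update [DecidableEq ι] (a : ι → S → ℝ) (h : S → ℝ)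
    (g : ι → ℝ) (k : ι) (x : ℝ) :
    HasDerivAt (fun x ↦ gaussianField a h (Function.update g k x)) (a k) x := by
  refine hasDerivAt_pi.2 fun σ ↦ ?_
  have hsum : HasDerivAt (fun x ↦ ∑ j, Function.update g k x j * a j σ)
      (∑ j, (Pi.single k 1 : ι → ℝ) j * a j σ) x :=
    HasDerivAt.fun_sum fun j _ ↦ (hasDerivAt_pi.1 (hasDerivAt_update g k x) j).mul_const (a j σ)
  simp only [gaussianField_apply]
  exact (hsum.add_const (h σ)).congr_deriv (by simp [Pi.single_apply])

variable [Fintype S]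

lemma integrable_gaussianField (a : ι → S → ℝ) (h : S → ℝ) :
    Integrable (gaussianField a h) (stdGaussianPi ι) :=
  (integrable_finsetSum _ fun k _ ↦ (integrable_eval_stdGaussianPi k).smul_const (a k)).add
    (integrable_const h)

variable [Nonempty S]

lemma integrable_eval_mul_gibbsAvg (a : ι → S → ℝ) (h f : S → ℝ) (k : ι) :
    Integrable (fun g ↦ g k * gibbsAvg (gaussianField a h g) f) (stdGaussianPi ι) :=
  (integrable_eval_stdGaussianPi k).mul_bdd (c := ‖f‖)
    (integrable_gibbsAvg (by fun_prop) f).aestronglyMeasurable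
    (ae_of_all _ fun _ ↦ abs_gibbsAvg_le_norm _ f)

lemma integrable_gibbsAvg_mul_gibbsAvg (a : ι → S → ℝ) (h f₁ f₂ : S → ℝ) :
    Integrable (fun g ↦ gibbsAvg (gaussianField a h g) f₁ * gibbsAvg (gaussianField a h g) f₂)
      (stdGaussianPi ι) :=
  (integrable_gibbsAvg (by fun_prop) f₁).mul_bdd (c := ‖f₂‖)
    (integrable_gibbsAvg (by fun_prop) f₂).aestronglyMeasurable
    (ae_of_all _ fun _ ↦ abs_gibbsAvg_le_norm _ f₂)

lemma integral_eval_mul_gibbsAvg (a : ι → S → ℝ) (h f : S → ℝ) (k : ι) :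
    ∫ g, g k * gibbsAvg (gaussianField a h g) f ∂stdGaussianPi ι =
      ∫ g, (gibbsAvg (gaussianField a h g) (f * a k) -
        gibbsAvg (gaussianField a h g) f * gibbsAvg (gaussianField a h g) (a k))
        ∂stdGaussianPi ι := by
  classical
  have hstein := integral_sub_mul_pi_gaussianReal (m := 0) (v := 1) k
    (f := fun g ↦ gibbsAvg (gaussianField a h g) f)
    (fun g x ↦ hasDerivAt_gibbsAvg (hasDerivAt_gaussianField_update a h g k x) f)
    (integrable_gibbsAvg (by fun_prop) f)
    ((integrable_gibbsAvg (by fun_prop) _).sub (integrable_gibbsAvg_mul_gibbsAvg a h f (a k)))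
    (by simpa using integrable_eval_mul_gibbsAvg a h f k)
  simpa using hstein

lemma sum_gibbsAvg_mul_sub_eq_replicaAvg (u : S → ℝ) (a a' : ι → S → ℝ) :
    ∑ k, (gibbsAvg u (a' k * a k) - gibbsAvg u (a' k) * gibbsAvg u (a k)) =
      replicaAvg u fun p ↦ ∑ k, a' k p.1 * a k p.1 - ∑ k, a' k p.1 * a k p.2 := by
  have hfun : (fun p : S × S ↦ ∑ k, a' k p.1 * a k p.1 - ∑ k, a' k p.1 * a k p.2) =
      ∑ k, ((fun p ↦ (a' k * a k) p.1) - fun p ↦ a' k p.1 * a k p.2) := by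
    ext p; simp [Finset.sum_apply]
  simp only [hfun, map_sum, map_sub, replicaAvg_fst, replicaAvg_mul]

lemma integrable_gibbsAvg_sum_smul (a a' : ι → S → ℝ) (h : S → ℝ) :
    Integrable (fun g ↦ gibbsAvg (gaussianField a h g) (∑ k, g k • a' k)) (stdGaussianPi ι) := by
  simp only [map_sum, map_smul, smul_eq_mul]
  exact integrable_finsetSum _ fun k _ ↦ integrable_eval_mul_gibbsAvg a h (a' k) k

lemma abs_gibbsAvg_sum_smul_le (u : S → ℝ) (a : ι → S → ℝ) (g : ι → ℝ) :
    |gibbsAvg u (∑ k, g k • a k)| ≤ (∑ k, |g k|) * ‖a‖ :=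
  calc |gibbsAvg u (∑ k, g k • a k)|
      ≤ ‖∑ k, g k • a k‖ := abs_gibbsAvg_le_norm _ _
    _ ≤ ∑ k, ‖g k • a k‖ := norm_sum_le _ _
    _ ≤ (∑ k, |g k|) * ‖a‖ := by
      rw [Finset.sum_mul]
      refine Finset.sum_le_sum fun k _ ↦ ?_
      rw [norm_smul, norm_eq_abs]
      gcongr
      exact norm_le_pi_norm a k

lemma hasDerivAt_integral_logSumExp_gaussianField {a a' : ℝ → ι → S → ℝ} {t : ℝ} (h : S → ℝ)
    (ha : ∀ᶠ s in 𝓝 t, HasDerivAt a (a' s) s) (ha' : ContinuousAt a' t) :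
    HasDerivAt (fun s ↦ ∫ g, logSumExp (gaussianField (a s) h g) ∂stdGaussianPi ι)
      (∫ g, gibbsAvg (gaussianField (a t) h g) (∑ k, g k • a' t k) ∂stdGaussianPi ι) t := by
  have hbdd : ∀ᶠ s in 𝓝 t, ‖a' s‖ ≤ ‖a' t‖ + 1 :=
    (ha'.norm.eventually (gt_mem_nhds (lt_add_one _))).mono fun _ ↦ le_of_lt
  have hfield (s : ℝ) (hs : HasDerivAt a (a' s) s) (g : ι → ℝ) :
      HasDerivAt (fun s ↦ gaussianField (a s) h g) (∑ k, g k • a' s k) s :=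
    (HasDerivAt.fun_sum fun k _ ↦ (hasDerivAt_pi.1 hs k).const_smul (g k)).add_const h
  have hint (s : ℝ) :
      Integrable (fun g ↦ logSumExp (gaussianField (a s) h g)) (stdGaussianPi ι) :=
    integrable_logSumExp (integrable_gaussianField (a s) h)
  refine (hasDerivAt_integral_of_dominated_loc_of_deriv_le (μ := stdGaussianPi ι) (x₀ := t)
    (s := {s | HasDerivAt a (a' s) s ∧ ‖a' s‖ ≤ ‖a' t‖ + 1})
    (F := fun s g ↦ logSumExp (gaussianField (a s) h g))
    (F' := fun s g ↦ gibbsAvg (gaussianField (a s) h g) (∑ k, g k • a' s k))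
    (bound := fun g ↦ (∑ k, |g k|) * (‖a' t‖ + 1))
    (ha.and hbdd) (.of_forall fun s ↦ (hint s).aestronglyMeasurable) (hint t)
    (integrable_gibbsAvg_sum_smul (a t) (a' t) h).aestronglyMeasurable
    (ae_of_all _ fun g s hs ↦ (abs_gibbsAvg_sum_smul_le _ (a' s) g).trans ?_)
    ((integrable_finsetSum _ fun k _ ↦ (integrable_eval_stdGaussianPi k).abs).mul_const _)
    (ae_of_all _ fun g s hs ↦ hasDerivAt_logSumExp (hfield s hs.1 g))).2
  exact mul_le_mul_of_nonneg_left hs.2 (Finset.sum_nonneg fun k _ ↦ abs_nonneg (g k))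

theorem hasDerivAt_integral_logSumExp_gaussianField_replica {a a' : ℝ → ι → S → ℝ} {t : ℝ}
    (h : S → ℝ) (ha : ∀ᶠ s in 𝓝 t, HasDerivAt a (a' s) s) (ha' : ContinuousAt a' t) :
    HasDerivAt (fun s ↦ ∫ g, logSumExp (gaussianField (a s) h g) ∂stdGaussianPi ι)
      (∫ g, replicaAvg (gaussianField (a t) h g)
        (fun p ↦ ∑ k, a' t k p.1 * a t k p.1 - ∑ k, a' t k p.1 * a t k p.2)
        ∂stdGaussianPi ι) t := by
  refine (hasDerivAt_integral_logSumExp_gaussianField h ha ha').congr_deriv ?_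
  have hcov (k : ι) : Integrable (fun g ↦ gibbsAvg (gaussianField (a t) h g) (a' t k * a t k) -
      gibbsAvg (gaussianField (a t) h g) (a' t k) * gibbsAvg (gaussianField (a t) h g) (a t k))
      (stdGaussianPi ι) :=
    (integrable_gibbsAvg (by fun_prop) _).sub (integrable_gibbsAvg_mul_gibbsAvg _ h _ _)
  simp only [map_sum, map_smul, smul_eq_mul, ← sum_gibbsAvg_mul_sub_eq_replicaAvg]
  rw [integral_finsetSum _ fun k _ ↦ integrable_eval_mul_gibbsAvg (a t) h (a' t k) k,
    integral_finsetSum _ fun k _ ↦ hcov k]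
  exact Finset.sum_congr rfl fun k _ ↦ integral_eval_mul_gibbsAvg (a t) h (a' t k) k

end GaussianField

section GuerraInterpolation

variable {ι κ S : Type*}

/-- The coefficients of the field `√t X + √(1 - t) Y`, where `X` and `Y` are independent Gaussian
fields with coefficients `a` and `b`. -/
def guerraInterpolation (a : ι → S → ℝ) (b : κ → S → ℝ) (t : ℝ) : ι ⊕ κ → S → ℝ :=
  Sum.elim (√t • a) (√(1 - t) • b)

/-- The derivative of `guerraInterpolation a b` on the open interval `(0, 1)`. -/
def derivGuerraInterpolation (a : ι → S → ℝ) (b : κ → S → ℝ) (t : ℝ) : ι ⊕ κ → S → ℝ :=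
  Sum.elim ((1 / (2 * √t)) • a) (-(1 / (2 * √(1 - t))) • b)

variable {t : ℝ}

lemma hasDerivAt_guerraInterpolation [Finite S] (a : ι → S → ℝ) (b : κ → S → ℝ)
    (ht : t ∈ Ioo (0 : ℝ) 1) :
    HasDerivAt (guerraInterpolation a b) (derivGuerraInterpolation a b t) t := by
  have hsub : HasDerivAt (fun s : ℝ ↦ √(1 - s)) (-(1 / (2 * √(1 - t)))) t :=
    (((hasDerivAt_id t).const_sub 1).sqrt (sub_pos.2 ht.2).ne').congr_deriv (by simp [neg_div])
  cases nonempty_fintype S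
  refine hasDerivAt_pi.2 fun k ↦ ?_
  cases k with
  | inl k => exact (hasDerivAt_sqrt ht.1.ne').smul_const (a k)
  | inr l => exact hsub.smul_const (b l)

lemma continuousAt_derivGuerraInterpolation (a : ι → S → ℝ) (b : κ → S → ℝ)
    (ht : t ∈ Ioo (0 : ℝ) 1) : ContinuousAt (derivGuerraInterpolation a b) t := by
  have h0 : 2 * √t ≠ 0 := by simpa using (sqrt_pos.2 ht.1).ne'
  have h1 : 2 * √(1 - t) ≠ 0 := by simpa using (sqrt_pos.2 (sub_pos.2 ht.2)).ne'
  refine continuousAt_pi.2 fun k ↦ continuousAt_pi.2 fun σ ↦ ?_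
  cases k <;>
  · simp only [derivGuerraInterpolation, Sum.elim_inl, Sum.elim_inr, Pi.smul_apply]
    fun_prop (disch := assumption)

variable [Fintype ι] [Fintype κ]

/-- The covariance `(σ, τ) ↦ ∑ k, a k σ * a k τ` of `gaussianField a h`. -/
def gaussianCov (a : ι → S → ℝ) (σ τ : S) : ℝ := ∑ k, a k σ * a k τ

lemma sum_derivGuerraInterpolation_mul (a : ι → S → ℝ) (b : κ → S → ℝ)
    (ht : t ∈ Ioo (0 : ℝ) 1) (σ τ : S) :
    ∑ k, derivGuerraInterpolation a b t k σ * guerraInterpolation a b t k τ =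
      1 / 2 * (gaussianCov a σ τ - gaussianCov b σ τ) := by
  have h0 : √t ≠ 0 := (sqrt_pos.2 ht.1).ne'
  have h1 : √(1 - t) ≠ 0 := (sqrt_pos.2 (sub_pos.2 ht.2)).ne'
  have hcancel {c : ℝ} (hc : c ≠ 0) (x y : ℝ) : 1 / (2 * c) * x * (c * y) = 1 / 2 * (x * y) := by
    field_simp
  simp only [Fintype.sum_sum_type, derivGuerraInterpolation, guerraInterpolation, Sum.elim_inl,
    Sum.elim_inr, Pi.smul_apply, smul_eq_mul, neg_mul, hcancel h0, hcancel h1,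
    Finset.sum_neg_distrib, ← Finset.mul_sum, gaussianCov]
  ring

theorem hasDerivAt_integral_logSumExp_guerraInterpolation [Fintype S] [Nonempty S]
    (a : ι → S → ℝ) (b : κ → S → ℝ) (h : S → ℝ) (ht : t ∈ Ioo (0 : ℝ) 1) :
    HasDerivAt
      (fun s ↦ ∫ g, logSumExp (gaussianField (guerraInterpolation a b s) h g)
        ∂stdGaussianPi (ι ⊕ κ))
      (∫ g, replicaAvg (gaussianField (guerraInterpolation a b t) h g)
        (fun p ↦ 1 / 2 * (gaussianCov a p.1 p.1 - gaussianCov b p.1 p.1) -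
          1 / 2 * (gaussianCov a p.1 p.2 - gaussianCov b p.1 p.2))
        ∂stdGaussianPi (ι ⊕ κ)) t := by
  have hderiv : ∀ᶠ s in 𝓝 t,
      HasDerivAt (guerraInterpolation a b) (derivGuerraInterpolation a b s) s := by
    filter_upwards [Ioo_mem_nhds ht.1 ht.2] with s hs
    exact hasDerivAt_guerraInterpolation a b hs
  simpa only [sum_derivGuerraInterpolation_mul a b ht] using
    hasDerivAt_integral_logSumExp_gaussianField_replica h hderiv
      (continuousAt_derivGuerraInterpolation a b ht)

end GuerraInterpolation

section Disorder

lemma measurePreserving_curry {ι κ X : Type*} [Fintype ι] [Fintype κ] [MeasurableSpace X]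
    (μ : Measure X) [IsProbabilityMeasure μ] :
    MeasurePreserving (MeasurableEquiv.curry ι κ X) (Measure.pi fun _ ↦ μ)
      (Measure.pi fun _ ↦ Measure.pi fun _ ↦ μ) := by
  have hmap := Measure.infinitePi_map_curry fun (_ : ι) (_ : κ) ↦ μ
  simp only [Measure.infinitePi_eq_pi] at hmap
  exact ⟨MeasurableEquiv.measurable _, hmap⟩

/-- Labels of the Gaussian disorder: `(x, i, j)` for the weight `ξ x i j` and `(x, i)` for the
field `η x i`. -/
abbrev DisorderIndex (ν N : ℕ) := (Fin ν × Fin N × Fin N) ⊕ (Fin ν × Fin N)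

instance (ν N : ℕ) : IsProbabilityMeasure (μW ν N) := by unfold μW; infer_instance

instance (ν N : ℕ) : IsProbabilityMeasure (μF ν N) := by unfold μF; infer_instance

/-- A single vector of disorder variables, split into weights and fields. -/
def disorderEquiv (ν N : ℕ) : (DisorderIndex ν N → ℝ) ≃ᵐ Weights ν N × Fields ν N :=
  (MeasurableEquiv.sumPiEquivProdPi fun _ ↦ ℝ).trans <|
    ((MeasurableEquiv.curry (Fin ν) (Fin N × Fin N) ℝ).trans <|
      .piCongrRight fun _ ↦ .curry (Fin N) (Fin N) ℝ).prodCongr (.curry (Fin ν) (Fin N) ℝ)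

lemma measurePreserving_disorderEquiv (ν N : ℕ) :
    MeasurePreserving (disorderEquiv ν N) (stdGaussianPi _) ((μW ν N).prod (μF ν N)) := by
  have hweights : MeasurePreserving ((MeasurableEquiv.curry (Fin ν) (Fin N × Fin N) ℝ).trans <|
      .piCongrRight fun _ ↦ .curry (Fin N) (Fin N) ℝ) (stdGaussianPi _) (μW ν N) :=
    (measurePreserving_pi (fun _ : Fin ν ↦ Measure.pi fun _ : Fin N × Fin N ↦ gaussianReal 0 1) _
      fun _ ↦ measurePreserving_curry _).comp (measurePreserving_curry _)
  exact (hweights.prod (measurePreserving_curry (gaussianReal 0 1))).comp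
    (measurePreserving_sumPiEquivProdPi fun _ ↦ gaussianReal 0 1)

lemma integral_integral_disorderEquiv_symm {ν N : ℕ} {F : (DisorderIndex ν N → ℝ) → ℝ}
    (hF : Integrable F (stdGaussianPi _)) :
    ∫ ξ, ∫ η, F ((disorderEquiv ν N).symm (ξ, η)) ∂μF ν N ∂μW ν N =
      ∫ g, F g ∂stdGaussianPi _ := by
  have hsymm := (measurePreserving_disorderEquiv ν N).symm
  rw [← hsymm.integral_comp']
  exact (integral_prod _ (hsymm.integrable_comp_of_integrable hF)).symm

end Disorder

section Coupling

variable {ν N : ℕ} (Nv : Fin ν → ℕ)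

/-- The spin `σ^x_i`, set to zero at the padding sites `i ≥ N_x`. -/
def activeSpin (σ : Config ν N) (x : Fin ν) (i : Fin N) : ℝ :=
  if (i : ℕ) < Nv x then sg (σ x i) else 0

/-- The spin `σ^{x+1}_j` of the layer following `x`, equal to zero on the last layer. -/
def nextSpin (σ : Config ν N) (x : Fin ν) (j : Fin N) : ℝ :=
  ∑ y : Fin ν, if (y : ℕ) = x + 1 then activeSpin Nv σ y j else 0

/-- The coefficient of the weight `ξ x i j` in `-β H_N`. -/
def couplingCoeff (β : ℝ) (k : Fin ν × Fin N × Fin N) (σ : Config ν N) : ℝ :=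
  β / √N * activeSpin Nv σ k.1 k.2.1 * nextSpin Nv σ k.1 k.2.2

/-- The coefficient of the field `η x i` in `-β H'_N`. -/
def fieldCoeff (α q : Fin ν → ℝ) (β : ℝ) (k : Fin ν × Fin N) (σ : Config ν N) : ℝ :=
  -β * √(Qv ν α q k.1) * activeSpin Nv σ k.1 k.2

/-- The exponent `-β H_{N,t} + ∑_x b_x ∑_i σ^x_i` as a Gaussian field in the disorder. -/
def interpolatingField (α q : Fin ν → ℝ) (β t : ℝ) (b : Fin ν → ℝ) :
    (DisorderIndex ν N → ℝ) → Config ν N → ℝ :=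
  gaussianField (guerraInterpolation (couplingCoeff Nv β) (fieldCoeff Nv α q β) t) (bias ν N Nv b)

lemma neg_mul_ham (β : ℝ) (ξ : Weights ν N) (σ : Config ν N) :
    -β * ham ν N Nv ξ σ = ∑ k, ξ k.1 k.2.1 k.2.2 * couplingCoeff Nv β k σ := by
  have hpair (x y : Fin ν) (i j : Fin N) :
      (if (i : ℕ) < Nv x ∧ (j : ℕ) < Nv y then ξ x i j / √N * sg (σ x i) * sg (σ y j) else 0) =
        ξ x i j / √N * activeSpin Nv σ x i * activeSpin Nv σ y j := by
    unfold activeSpin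
    split_ifs <;> grind
  have hlayer (x : Fin ν) :
      (∑ y : Fin ν, if (y : ℕ) = x + 1 then
        ∑ i, ∑ j, ξ x i j / √N * activeSpin Nv σ x i * activeSpin Nv σ y j else 0) =
        ∑ i, ∑ j, ξ x i j / √N * activeSpin Nv σ x i * nextSpin Nv σ x j := by
    simp only [nextSpin, Finset.mul_sum, ← Finset.sum_filter]
    rw [Finset.sum_comm]
    exact Finset.sum_congr rfl fun i _ ↦ Finset.sum_comm
  simp only [ham, hpair, hlayer, neg_mul_neg, Finset.mul_sum, Fintype.sum_prod_type, couplingCoeff]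
  congr! 3
  ring

lemma neg_mul_ham' (α q : Fin ν → ℝ) (β : ℝ) (η : Fields ν N) (σ : Config ν N) :
    -β * ham' ν N Nv α q η σ = ∑ k, η k.1 k.2 * fieldCoeff Nv α q β k σ := by
  simp only [ham', Finset.mul_sum, Fintype.sum_prod_type, fieldCoeff, activeSpin]
  congr! 2
  split_ifs <;> ring

lemma interpolatingField_disorderEquiv_symm (α q : Fin ν → ℝ) (β t : ℝ) (b : Fin ν → ℝ)
    (ξ : Weights ν N) (η : Fields ν N) (σ : Config ν N) :
    interpolatingField Nv α q β t b ((disorderEquiv ν N).symm (ξ, η)) σ =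
      -β * hamT ν N Nv α q t ξ η σ + bias ν N Nv b σ := by
  have hweight (k) : (disorderEquiv ν N).symm (ξ, η) (.inl k) = ξ k.1 k.2.1 k.2.2 := rfl
  have hfield (k) : (disorderEquiv ν N).symm (ξ, η) (.inr k) = η k.1 k.2 := rfl
  have hhamT : -β * hamT ν N Nv α q t ξ η σ =
      √t * (-β * ham ν N Nv ξ σ) + √(1 - t) * (-β * ham' ν N Nv α q η σ) := by
    rw [hamT]; ring
  simp only [interpolatingField, gaussianField_apply, Fintype.sum_sum_type, guerraInterpolation,
    Sum.elim_inl, Sum.elim_inr, Pi.smul_apply, smul_eq_mul, hweight, hfield, hhamT, neg_mul_ham,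
    neg_mul_ham', Finset.mul_sum, mul_left_comm]

variable (α q : Fin ν → ℝ) (β t : ℝ) (b : Fin ν → ℝ) (ξ : Weights ν N) (η : Fields ν N)

lemma log_Z_eq_logSumExp :
    log (Z ν N Nv α q β t b ξ η) =
      logSumExp (interpolatingField Nv α q β t b ((disorderEquiv ν N).symm (ξ, η))) -
        log (2 ^ (ν * N)) := by
  simp only [Z, bw, logSumExp, ← interpolatingField_disorderEquiv_symm]
  exact log_div (sum_exp_pos _).ne' (by positivity)

lemma gibbs2_eq_replicaAvg (f : Config ν N → Config ν N → ℝ) :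
    gibbs2 ν N Nv α q β t b ξ η f =
      replicaAvg (interpolatingField Nv α q β t b ((disorderEquiv ν N).symm (ξ, η)))
        fun p ↦ f p.1 p.2 := by
  rw [replicaAvg, gibbsAvg_apply, sum_exp_add_prod]
  simp only [gibbs2, bw, ← interpolatingField_disorderEquiv_symm, Fintype.sum_prod_type, exp_add,
    mul_assoc]

end Coupling

section Overlap

variable {ν N : ℕ}

lemma adjSum_eq_sum_filter (F : Fin ν → Fin ν → ℝ) :
    adjSum ν F = ∑ p : Fin ν × Fin ν with (p.2 : ℕ) = p.1 + 1, F p.1 p.2 := by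
  simp only [adjSum, Finset.sum_filter, Fintype.sum_prod_type]

lemma sum_Qv_mul (α q F : Fin ν → ℝ) :
    ∑ x, Qv ν α q x * F x = adjSum ν fun x y ↦ α y * q y * F x + α x * q x * F y := by
  have hsplit (x y : Fin ν) :
      (if (y : ℕ) = x + 1 ∨ (y : ℕ) + 1 = x then α y * q y else 0) * F x =
        (if (y : ℕ) = x + 1 then α y * q y * F x else 0) +
          if (x : ℕ) = y + 1 then α y * q y * F x else 0 := by
    split_ifs <;> grind
  simp only [Qv, Finset.sum_mul, hsplit, Finset.sum_add_distrib]
  rw [Finset.sum_comm (f := fun x y : Fin ν ↦ if (x : ℕ) = y + 1 then _ else _)]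
  simp only [adjSum, ← Finset.sum_add_distrib, ite_add_ite, add_zero]

lemma Qv_nonneg {α q : Fin ν → ℝ} (hα : ∀ x, 0 ≤ α x) (hq : ∀ x, 0 ≤ q x) (x : Fin ν) :
    0 ≤ Qv ν α q x :=
  Finset.sum_nonneg fun y _ ↦ ite_nonneg (mul_nonneg (hα y) (hq y)) le_rfl

lemma sg_mul_self (s : Bool) : sg s * sg s = 1 := by
  cases s <;> simp [sg]

variable {Nv : Fin ν → ℕ} {α : Fin ν → ℝ}

lemma ovl_self {x : Fin ν} (hpos : 0 < Nv x) (hle : Nv x ≤ N) (σ : Config ν N) :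
    ovl ν N Nv x σ σ = 1 := by
  have hne : (Nv x : ℝ) ≠ 0 := by positivity
  rw [ovl, div_eq_one_iff_eq hne]
  simp only [sg_mul_self, Finset.sum_boole, Fin.card_filter_val_lt, min_eq_right hle]

lemma sum_activeSpin_mul_activeSpin (hN : 0 < N) (hNv : ∀ x, 0 < Nv x)
    (hα : ∀ x, α x = (Nv x : ℝ) / N) (σ τ : Config ν N) (x : Fin ν) :
    ∑ i, activeSpin Nv σ x i * activeSpin Nv τ x i = N * (α x * ovl ν N Nv x σ τ) := by
  have hne : (Nv x : ℝ) ≠ 0 := by exact_mod_cast (hNv x).ne'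
  simp only [activeSpin, ite_mul_ite, mul_zero, hα, ovl]
  field_simp

lemma nextSpin_mul_nextSpin (σ τ : Config ν N) (x : Fin ν) (j : Fin N) :
    nextSpin Nv σ x j * nextSpin Nv τ x j =
      ∑ y : Fin ν, if (y : ℕ) = x + 1 then activeSpin Nv σ y j * activeSpin Nv τ y j else 0 := by
  unfold nextSpin
  by_cases hx : (x : ℕ) + 1 < ν
  · have hnext (y : Fin ν) : (y : ℕ) = x + 1 ↔ y = ⟨x + 1, hx⟩ := by rw [Fin.ext_iff]
    simp only [hnext, Finset.sum_ite_eq', Finset.mem_univ, if_true]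
  · have hnext (y : Fin ν) : ¬(y : ℕ) = x + 1 := fun hy ↦ hx (hy ▸ y.2)
    simp only [hnext, if_false, Finset.sum_const_zero, mul_zero]

lemma gaussianCov_couplingCoeff (hN : 0 < N) (hNv : ∀ x, 0 < Nv x)
    (hα : ∀ x, α x = (Nv x : ℝ) / N) (β : ℝ) (σ τ : Config ν N) :
    gaussianCov (couplingCoeff Nv β) σ τ =
      β ^ 2 * N * adjSum ν fun x y ↦ α x * ovl ν N Nv x σ τ * (α y * ovl ν N Nv y σ τ) := by
  have hsq : (β / √N) * (β / √N) = β ^ 2 / N := by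
    rw [div_mul_div_comm, mul_self_sqrt N.cast_nonneg, sq]
  have hcoeff (x : Fin ν) (i j : Fin N) :
      couplingCoeff Nv β (x, i, j) σ * couplingCoeff Nv β (x, i, j) τ =
        β ^ 2 / N * ((activeSpin Nv σ x i * activeSpin Nv τ x i) *
          (nextSpin Nv σ x j * nextSpin Nv τ x j)) := by
    rw [← hsq]; simp only [couplingCoeff]; ring
  have hnext (x : Fin ν) : ∑ j, nextSpin Nv σ x j * nextSpin Nv τ x j =
      ∑ y : Fin ν, if (y : ℕ) = x + 1 then N * (α y * ovl ν N Nv y σ τ) else 0 := by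
    simp only [nextSpin_mul_nextSpin, ← sum_activeSpin_mul_activeSpin hN hNv hα]
    rw [Finset.sum_comm]
    simp only [Finset.sum_ite_irrel, Finset.sum_const_zero]
  simp only [gaussianCov, Fintype.sum_prod_type, hcoeff, ← Finset.mul_sum, ← Finset.sum_mul,
    sum_activeSpin_mul_activeSpin hN hNv hα, hnext, adjSum]
  simp only [Finset.mul_sum, mul_ite, mul_zero]
  congr! 3
  field_simp

lemma gaussianCov_fieldCoeff (hN : 0 < N) (hNv : ∀ x, 0 < Nv x)
    (hα : ∀ x, α x = (Nv x : ℝ) / N) {q : Fin ν → ℝ} (hQ : ∀ x, 0 ≤ Qv ν α q x) (β : ℝ)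
    (σ τ : Config ν N) :
    gaussianCov (fieldCoeff Nv α q β) σ τ =
      β ^ 2 * N * adjSum ν fun x y ↦ α y * q y * (α x * ovl ν N Nv x σ τ) +
        α x * q x * (α y * ovl ν N Nv y σ τ) := by
  have hcoeff (x : Fin ν) (i : Fin N) :
      fieldCoeff Nv α q β (x, i) σ * fieldCoeff Nv α q β (x, i) τ =
        β ^ 2 * Qv ν α q x * (activeSpin Nv σ x i * activeSpin Nv τ x i) := by
    simp only [fieldCoeff]
    linear_combination
      β ^ 2 * (activeSpin Nv σ x i * activeSpin Nv τ x i) * mul_self_sqrt (hQ x)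
  rw [← sum_Qv_mul]
  simp only [gaussianCov, Fintype.sum_prod_type, hcoeff, ← Finset.mul_sum,
    sum_activeSpin_mul_activeSpin hN hNv hα]
  rw [Finset.mul_sum]
  exact Finset.sum_congr rfl fun x _ ↦ by ring

lemma gaussianCov_couplingCoeff_sub_fieldCoeff (hN : 0 < N) (hNv : ∀ x, 0 < Nv x)
    (hα : ∀ x, α x = (Nv x : ℝ) / N) {q : Fin ν → ℝ} (hQ : ∀ x, 0 ≤ Qv ν α q x) (β : ℝ)
    (σ τ : Config ν N) :
    gaussianCov (couplingCoeff Nv β) σ τ - gaussianCov (fieldCoeff Nv α q β) σ τ =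
      β ^ 2 * N * (adjSum ν (fun x y ↦ α x * α y *
        ((q x - ovl ν N Nv x σ τ) * (q y - ovl ν N Nv y σ τ))) -
          adjSum ν fun x y ↦ α x * α y * (q x * q y)) := by
  rw [gaussianCov_couplingCoeff hN hNv hα, gaussianCov_fieldCoeff hN hNv hα hQ, ← mul_sub]
  simp only [adjSum_eq_sum_filter, ← Finset.sum_sub_distrib]
  congr! 2
  ring

lemma half_gaussianCov_diag_sub_offDiag (hN : 0 < N) (hNv : ∀ x, 0 < Nv x) (hle : ∀ x, Nv x ≤ N)
    (hα : ∀ x, α x = (Nv x : ℝ) / N) {q : Fin ν → ℝ} (hQ : ∀ x, 0 ≤ Qv ν α q x) (β : ℝ)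
    (σ τ : Config ν N) :
    1 / 2 * (gaussianCov (couplingCoeff Nv β) σ σ - gaussianCov (fieldCoeff Nv α q β) σ σ) -
        1 / 2 * (gaussianCov (couplingCoeff Nv β) σ τ - gaussianCov (fieldCoeff Nv α q β) σ τ) =
      N * (β ^ 2 / 2) * (adjSum ν (fun x y ↦ α x * α y * (1 - q x) * (1 - q y)) -
        adjSum ν fun x y ↦ α x * α y *
          ((q x - ovl ν N Nv x σ τ) * (q y - ovl ν N Nv y σ τ))) := by
  have hdiag (x y : Fin ν) : α x * α y * ((q x - 1) * (q y - 1)) =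
      α x * α y * (1 - q x) * (1 - q y) := by ring
  simp only [gaussianCov_couplingCoeff_sub_fieldCoeff hN hNv hα hQ,
    ovl_self (hNv _) (hle _), hdiag]
  ring

end Overlap

section Derivative

variable {ν N : ℕ} {Nv : Fin ν → ℕ} {α q : Fin ν → ℝ} (β t : ℝ) (b : Fin ν → ℝ)

lemma integrable_interpolatingField :
    Integrable (interpolatingField (N := N) Nv α q β t b) (stdGaussianPi _) :=
  integrable_gaussianField _ _

lemma integral_log_Z :
    ∫ ξ, ∫ η, log (Z ν N Nv α q β t b ξ η) ∂μF ν N ∂μW ν N =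
      ∫ g, logSumExp (interpolatingField (N := N) Nv α q β t b g) ∂stdGaussianPi _ -
        log (2 ^ (ν * N)) := by
  have hint : Integrable (fun g ↦ logSumExp (interpolatingField (N := N) Nv α q β t b g))
      (stdGaussianPi _) :=
    integrable_logSumExp (integrable_interpolatingField β t b)
  have hdisorder := integral_integral_disorderEquiv_symm
    (hint.sub (integrable_const (log (2 ^ (ν * N)))))
  simp only [Pi.sub_apply] at hdisorder
  simp only [log_Z_eq_logSumExp, hdisorder, integral_sub hint (integrable_const _),
    integral_const, probReal_univ, one_smul]

lemma integral_gibbs2 (f : Config ν N → Config ν N → ℝ) :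
    ∫ ξ, ∫ η, gibbs2 ν N Nv α q β t b ξ η f ∂μF ν N ∂μW ν N =
      ∫ g, replicaAvg (interpolatingField Nv α q β t b g) (fun p ↦ f p.1 p.2)
        ∂stdGaussianPi _ := by
  simp only [gibbs2_eq_replicaAvg]
  exact integral_integral_disorderEquiv_symm
    (integrable_replicaAvg (integrable_interpolatingField β t b).aemeasurable fun p ↦ f p.1 p.2)

lemma integral_replicaAvg_half_gaussianCov_diag_sub_offDiag (hN : 0 < N)
    (hNv : ∀ x, 0 < Nv x) (hle : ∀ x, Nv x ≤ N) (hα : ∀ x, α x = (Nv x : ℝ) / N)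
    (hQ : ∀ x, 0 ≤ Qv ν α q x) :
    ∫ g, replicaAvg (interpolatingField (N := N) Nv α q β t b g)
        (fun p ↦ 1 / 2 * (gaussianCov (couplingCoeff Nv β) p.1 p.1 -
            gaussianCov (fieldCoeff Nv α q β) p.1 p.1) -
          1 / 2 * (gaussianCov (couplingCoeff Nv β) p.1 p.2 -
            gaussianCov (fieldCoeff Nv α q β) p.1 p.2)) ∂stdGaussianPi _ =
      N * (β ^ 2 / 2) * (adjSum ν (fun x y ↦ α x * α y * (1 - q x) * (1 - q y)) -
        adjSum ν fun x y ↦ α x * α y * ∫ ξ, ∫ η, gibbs2 ν N Nv α q β t b ξ η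
          (fun σ τ ↦ (q x - ovl ν N Nv x σ τ) * (q y - ovl ν N Nv y σ τ)) ∂μF ν N ∂μW ν N) := by
  simp only [half_gaussianCov_diag_sub_offDiag hN hNv hle hα hQ, integral_gibbs2]
  have hfactor (u : Config ν N → ℝ) (c : ℝ) (f : Config ν N × Config ν N → ℝ) :
      replicaAvg u (fun p ↦ c * f p) = c * replicaAvg u f := map_smul (replicaAvg u) c f
  simp only [hfactor, integral_const_mul]
  rw [adjSum_eq_sum_filter fun x y ↦ α x * α y * ∫ g, _ ∂_]
  simp only [adjSum_eq_sum_filter (fun x y ↦ α x * α y * ((q x - _) * _))]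
  rw [integral_replicaAvg_const_sub_sum (integrable_interpolatingField β t b).aemeasurable]

theorem phi_derivative_general (hN : 0 < N) (hNv : ∀ x, 0 < Nv x) (hle : ∀ x, Nv x ≤ N)
    (hα : ∀ x, α x = (Nv x : ℝ) / N) (hQ : ∀ x, 0 ≤ Qv ν α q x) (ht : t ∈ Ioo (0 : ℝ) 1) :
    HasDerivAt
      (fun s ↦ (1 / (N : ℝ)) * ∫ ξ, ∫ η, log (Z ν N Nv α q β s b ξ η) ∂μF ν N ∂μW ν N)
      (β ^ 2 / 2 * adjSum ν (fun x y ↦ α x * α y * (1 - q x) * (1 - q y)) -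
        β ^ 2 / 2 * adjSum ν (fun x y ↦ α x * α y *
          ∫ ξ, ∫ η, gibbs2 ν N Nv α q β t b ξ η
            (fun σ τ ↦ (q x - ovl ν N Nv x σ τ) * (q y - ovl ν N Nv y σ τ))
            ∂μF ν N ∂μW ν N)) t := by
  have hguerra := hasDerivAt_integral_logSumExp_guerraInterpolation (couplingCoeff Nv β)
    (fieldCoeff (N := N) Nv α q β) (bias ν N Nv b) ht
  have hreplica := integral_replicaAvg_half_gaussianCov_diag_sub_offDiag β t b hN hNv hle hα hQ
  simp only [integral_log_Z]
  refine ((hguerra.sub_const (log (2 ^ (ν * N)))).const_mul (1 / (N : ℝ))).congr_deriv ?_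
  rw [interpolatingField] at hreplica
  rw [hreplica]
  field_simp

end Derivative

/-- along the interpolation `H_{N,t} = √t H_N + √(1−t) H'_N`,
the derivative of `φ_N(t) = (1/N) E[log Z_N(t)]` equals
`(β²/2) Σ_{|x−y|=1} α_x α_y (1−q_x)(1−q_y)
  − (β²/2) Σ_{|x−y|=1} α_x α_y E⟨(q_x − R^{(x)})(q_y − R^{(y)})⟩_t`. -/
theorem phi_derivative
    (ν N : ℕ) (hν : 2 ≤ ν) (hN : 0 < N)
    (Nv : Fin ν → ℕ) (hNv : ∀ x, 0 < Nv x) (hsum : ∑ x, Nv x = N)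
    (β : ℝ) (hβ : 0 ≤ β) (b : Fin ν → ℝ)
    (q : Fin ν → ℝ) (hq : ∀ x, q x ∈ Icc (0:ℝ) 1)
    (α : Fin ν → ℝ) (hα : ∀ x, α x = (Nv x : ℝ) / N) :
    ∀ t ∈ Ioo (0:ℝ) 1,
      HasDerivAt
        (fun s => (1 / (N:ℝ)) *
          ∫ ξ, ∫ η, Real.log (Z ν N Nv α q β s b ξ η) ∂(μF ν N) ∂(μW ν N))
        (β ^ 2 / 2 * adjSum ν (fun x y => α x * α y * (1 - q x) * (1 - q y)) -
          β ^ 2 / 2 * adjSum ν (fun x y => α x * α y *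
            ∫ ξ, ∫ η,
              gibbs2 ν N Nv α q β t b ξ η
                (fun σ τ => (q x - ovl ν N Nv x σ τ) * (q y - ovl ν N Nv y σ τ))
              ∂(μF ν N) ∂(μW ν N))) t := by
  have hle (x : Fin ν) : Nv x ≤ N :=
    hsum ▸ Finset.single_le_sum (fun _ _ ↦ Nat.zero_le _) (Finset.mem_univ x)
  have hα_nonneg (x : Fin ν) : 0 ≤ α x := hα x ▸ by positivity
  exact fun t ht ↦ phi_derivative_general β t b hN hNv hle hα
    (Qv_nonneg hα_nonneg fun x ↦ (hq x).1) ht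

end DRBM
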